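/- For every n ≥ 1, all bit strings s, t, s', t' ∈ {0,1}^n, and every matrix ρ ∈ M_{2^n}(ℂ), setting P = X^s Z^t and P' = X^{s'} Z^{t'}, one has (1/4^n) · Σ_{a,b ∈ {0,1}^n} (X^a Z^b)† P (X^a Z^b) ρ (X^a Z^b) P'† (X^a Z^b)† = P ρ P† if (s,t) = (s',t'), and this sum equals the zero matrix if (s,t) ≠ (s',t'). -/

import Mathlib

/-!
Conjugating one Pauli string by another changes it at most by a sign:
`W† (X^s Z^t) W = ± X^s Z^t` for `W = X^a Z^b`, the sign being `(-1)^(s·b + a·t)`. The adjoint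
factor picks up the analogous sign for `(s', t')` (`twirl_conj`, `twirl_conj_adjoint`), so every
term of the sum is a scalar multiple of `P ρ P'†`. The scalars are products over the `n` sites, and
their sum over all `(a, b)` factors into a product of sums over single sites, each of which is
`4` or `0` by orthogonality of the characters of `(ℤ/2)²` (`sum_sign`).

The conjugation rules reduce to identities between `2 × 2` matrices because Kronecker products
multiply factor by factor (`kron_mul`).
-/

open Matrix Kronecker BigOperators

namespace Paper

noncomputable section

/-- The Pauli X matrix. -/
def X : Matrix (Fin 2) (Fin 2) ℂ := !![0, 1; 1, 0]

/-- The Pauli Z matrix. -/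
def Z : Matrix (Fin 2) (Fin 2) ℂ := !![1, 0; 0, -1]

/-- The n-fold Kronecker product `⊗ᵢ M^(a i)`, rows/columns indexed by `Fin n → Fin 2`. -/
def pauliPow (M : Matrix (Fin 2) (Fin 2) ℂ) {n : ℕ} (a : Fin n → Fin 2) :
    Matrix (Fin n → Fin 2) (Fin n → Fin 2) ℂ :=
  Matrix.of fun r c => ∏ i, (M ^ (a i : ℕ)) (r i) (c i)

/-- `X^a` for a bit string `a ∈ {0,1}^n`. -/
def Xs {n : ℕ} (a : Fin n → Fin 2) : Matrix (Fin n → Fin 2) (Fin n → Fin 2) ℂ := pauliPow X a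

/-- `Z^b` for a bit string `b ∈ {0,1}^n`. -/
def Zs {n : ℕ} (b : Fin n → Fin 2) : Matrix (Fin n → Fin 2) (Fin n → Fin 2) ℂ := pauliPow Z b

/-- The Kronecker product `⊗ᵢ A i` of `2 × 2` matrices, indexed like `pauliPow`. -/
def kron {n : ℕ} (A : Fin n → Matrix (Fin 2) (Fin 2) ℂ) :
    Matrix (Fin n → Fin 2) (Fin n → Fin 2) ℂ :=
  Matrix.of fun r c => ∏ i, A i (r i) (c i)

lemma kron_mul {n : ℕ} (A B : Fin n → Matrix (Fin 2) (Fin 2) ℂ) :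
    kron A * kron B = kron fun i => A i * B i := by
  ext r c
  simp only [kron, Matrix.mul_apply, Matrix.of_apply, ← Finset.prod_mul_distrib]
  rw [Finset.prod_univ_sum, Fintype.piFinset_univ]

lemma kron_conjTranspose {n : ℕ} (A : Fin n → Matrix (Fin 2) (Fin 2) ℂ) :
    (kron A)ᴴ = kron fun i => (A i)ᴴ := by
  ext r c
  simp [kron, Matrix.conjTranspose_apply]

lemma kron_smul {n : ℕ} (c : Fin n → ℂ) (A : Fin n → Matrix (Fin 2) (Fin 2) ℂ) :
    (kron fun i => c i • A i) = (∏ i, c i) • kron A := by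
  ext x y
  simp [kron, Finset.prod_mul_distrib]

lemma Xs_mul_Zs {n : ℕ} (a b : Fin n → Fin 2) :
    Xs a * Zs b = kron fun i => X ^ (a i : ℕ) * Z ^ (b i : ℕ) :=
  kron_mul (fun i => X ^ (a i : ℕ)) (fun i => Z ^ (b i : ℕ))

/-- The sign `(-1)^(s b + a t)` relating `W† P W` to `P` for the one-qubit Paulis
`W = X^a Z^b` and `P = X^s Z^t`. -/
def siteSign (a b s t : Fin 2) : ℂ := (-1) ^ ((s : ℕ) * b + a * t)

lemma site_conj (a b s t : Fin 2) :
    (X ^ (a : ℕ) * Z ^ (b : ℕ))ᴴ * (X ^ (s : ℕ) * Z ^ (t : ℕ)) * (X ^ (a : ℕ) * Z ^ (b : ℕ)) =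
      siteSign a b s t • (X ^ (s : ℕ) * Z ^ (t : ℕ)) := by
  fin_cases a <;> fin_cases b <;> fin_cases s <;> fin_cases t <;> ext i j <;>
    fin_cases i <;> fin_cases j <;>
    simp [X, Z, siteSign, Matrix.mul_apply, Fin.sum_univ_two, Matrix.one_apply]

lemma site_conj_adjoint (a b s t : Fin 2) :
    (X ^ (a : ℕ) * Z ^ (b : ℕ)) * (X ^ (s : ℕ) * Z ^ (t : ℕ))ᴴ * (X ^ (a : ℕ) * Z ^ (b : ℕ))ᴴ =
      siteSign a b s t • (X ^ (s : ℕ) * Z ^ (t : ℕ))ᴴ := by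
  fin_cases a <;> fin_cases b <;> fin_cases s <;> fin_cases t <;> ext i j <;>
    fin_cases i <;> fin_cases j <;>
    simp [X, Z, siteSign, Matrix.mul_apply, Fin.sum_univ_two, Matrix.one_apply,
      Matrix.vecMul, dotProduct]

lemma twirl_conj {n : ℕ} (a b s t : Fin n → Fin 2) :
    (Xs a * Zs b)ᴴ * (Xs s * Zs t) * (Xs a * Zs b) =
      (∏ i, siteSign (a i) (b i) (s i) (t i)) • (Xs s * Zs t) := by
  simp only [Xs_mul_Zs, kron_conjTranspose, kron_mul, site_conj, kron_smul]

/-- The conjugation here is by `W = X^a Z^b` where `twirl_conj` has `W†`. The sign is the same,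
since `W` and `W†` agree up to sign. -/
lemma twirl_conj_adjoint {n : ℕ} (a b s t : Fin n → Fin 2) :
    (Xs a * Zs b) * (Xs s * Zs t)ᴴ * (Xs a * Zs b)ᴴ =
      (∏ i, siteSign (a i) (b i) (s i) (t i)) • (Xs s * Zs t)ᴴ := by
  simp only [Xs_mul_Zs, kron_conjTranspose, kron_mul, site_conj_adjoint, kron_smul]

/-- Orthogonality of the sign characters of `(ℤ/2)²` attached to `(s, t)` and `(s', t')`. -/
lemma site_sum (s t s' t' : Fin 2) :
    ∑ a, ∑ b, siteSign a b s t * siteSign a b s' t' = if (s, t) = (s', t') then 4 else 0 := by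
  fin_cases s <;> fin_cases t <;> fin_cases s' <;> fin_cases t' <;>
    norm_num [siteSign, Fin.sum_univ_two]

lemma sum_sign {n : ℕ} (s t s' t' : Fin n → Fin 2) :
    ∑ a : Fin n → Fin 2, ∑ b : Fin n → Fin 2,
      ∏ i, siteSign (a i) (b i) (s i) (t i) * siteSign (a i) (b i) (s' i) (t' i) =
      if (s, t) = (s', t') then 4 ^ n else 0 := by
  have hb : ∀ a : Fin n → Fin 2, ∑ b : Fin n → Fin 2,
      ∏ i, siteSign (a i) (b i) (s i) (t i) * siteSign (a i) (b i) (s' i) (t' i) =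
      ∏ i, ∑ y, siteSign (a i) y (s i) (t i) * siteSign (a i) y (s' i) (t' i) := fun a => by
    rw [Finset.prod_univ_sum, Fintype.piFinset_univ]
  have ha := Finset.prod_univ_sum (fun _ : Fin n => (Finset.univ : Finset (Fin 2)))
    (fun i x => ∑ y, siteSign x y (s i) (t i) * siteSign x y (s' i) (t' i))
  rw [Fintype.piFinset_univ] at ha
  simp only [hb, ← ha, site_sum]
  split_ifs with h
  · obtain ⟨rfl, rfl⟩ := Prod.mk.inj h
    simp
  · obtain ⟨i, hi⟩ : ∃ i, (s i, t i) ≠ (s' i, t' i) := by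
      by_contra! hc
      exact h (Prod.ext (funext fun i => (Prod.mk.inj (hc i)).1)
        (funext fun i => (Prod.mk.inj (hc i)).2))
    exact Finset.prod_eq_zero (Finset.mem_univ i) (if_neg hi)

/-- **Pauli twirl**: averaging conjugation by a uniformly random Pauli one-time pad kills
all cross terms `P ρ P'†` with `P ≠ P'`, and fixes the diagonal terms. -/
theorem pauli_twirl {n : ℕ} (hn : 1 ≤ n) (s t s' t' : Fin n → Fin 2)
    (ρ : Matrix (Fin n → Fin 2) (Fin n → Fin 2) ℂ) :
    (1 / 4 ^ n : ℂ) •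
        ∑ a : Fin n → Fin 2, ∑ b : Fin n → Fin 2,
          (Xs a * Zs b)ᴴ * (Xs s * Zs t) * (Xs a * Zs b) * ρ *
            (Xs a * Zs b) * (Xs s' * Zs t')ᴴ * (Xs a * Zs b)ᴴ =
      if (s, t) = (s', t') then (Xs s * Zs t) * ρ * (Xs s * Zs t)ᴴ else 0 := by
  have hterm : ∀ a b : Fin n → Fin 2,
      (Xs a * Zs b)ᴴ * (Xs s * Zs t) * (Xs a * Zs b) * ρ *
        (Xs a * Zs b) * (Xs s' * Zs t')ᴴ * (Xs a * Zs b)ᴴ =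
      (∏ i, siteSign (a i) (b i) (s i) (t i) * siteSign (a i) (b i) (s' i) (t' i)) •
        ((Xs s * Zs t) * ρ * (Xs s' * Zs t')ᴴ) := by
    intro a b
    have h1 := twirl_conj a b s t
    have h2 := twirl_conj_adjoint a b s' t'
    calc _ = ((Xs a * Zs b)ᴴ * (Xs s * Zs t) * (Xs a * Zs b)) * ρ *
            ((Xs a * Zs b) * (Xs s' * Zs t')ᴴ * (Xs a * Zs b)ᴴ) := by
          simp only [Matrix.mul_assoc]
      _ = _ := by
          rw [h1, h2, Finset.prod_mul_distrib]
          simp only [Matrix.smul_mul, Matrix.mul_smul, smul_smul]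
          rw [mul_comm]
  simp only [hterm, ← Finset.sum_smul]
  rw [sum_sign, smul_smul]
  by_cases h : (s, t) = (s', t')
  · obtain ⟨rfl, rfl⟩ := Prod.mk.inj h
    simp
  · simp [h]

end

end Paper
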